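/- arXiv:0801.0233 — 2 statements merged into one kernel-verified Lean document; each statement's English description precedes it below -/
import Mathlib

section
/- Let λ, μ ∈ P_n and let m be any integer with m ≥ λ'_1 and m ≥ μ'_1 (the numbers of columns of λ and μ). Then d_{λ,n}^μ(y) = c_{μ^c, m}^{λ^c}(−y), where λ^c, μ^c ∈ P_m are the partitions complementary to λ and μ in the n×m rectangle, and −y = (−y_1, −y_2, …). -/
open Finset MvPolynomial

attribute [local instance] Classical.propDecidable

/-- A partition in `P_n`: a weakly decreasing sequence of naturals. -/
def IsPartition {n : ℕ} (lam : Fin n → ℕ) : Prop := Antitone lam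

/-- The cells of the Young diagram of `lam`, as pairs (row, column), 0-based. -/
noncomputable def cells {n : ℕ} (lam : Fin n → ℕ) : Finset (Fin n × ℕ) :=
  (Finset.univ ×ˢ Finset.range (Finset.univ.sup lam)).filter fun c => c.2 < lam c.1

/-- Semistandardness for a filling with values in `Fin n` (0-based values):
rows weakly increase, columns strictly increase. -/
def IsSSYT {n : ℕ} (lam : Fin n → ℕ) (T : cells lam → Fin n) : Prop :=
  (∀ c d : cells lam, (c : Fin n × ℕ).1 = (d : Fin n × ℕ).1 →
      (c : Fin n × ℕ).2 ≤ (d : Fin n × ℕ).2 → T c ≤ T d) ∧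
  (∀ c d : cells lam, (c : Fin n × ℕ).2 = (d : Fin n × ℕ).2 →
      (c : Fin n × ℕ).1 < (d : Fin n × ℕ).1 → T c < T d)

/-- The y-subscript `a + c(a) - r(a)` of a cell (1-based value and coordinates). -/
def ysub {n : ℕ} (a : Fin n) (c : Fin n × ℕ) : ℤ := (a : ℤ) + 1 + (c.2 : ℤ) - ((c.1 : ℕ) : ℤ)

/-- The Schur polynomial `s_lam(x_{(n)})`, in the ring with `x`-variables
`Sum.inl i` and `y`-variables `Sum.inr k` (`y_k` for `k ≥ 1`). -/
noncomputable def schurN (n : ℕ) (lam : Fin n → ℕ) : MvPolynomial (Fin n ⊕ ℤ) ℤ :=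
  ∑ T ∈ Finset.univ.filter (IsSSYT lam), ∏ c : cells lam, X (Sum.inl (T c))

/-- The factorial Schur polynomial `s_lam(x_{(n)} | y)`. -/
noncomputable def factSchurN (n : ℕ) (lam : Fin n → ℕ) : MvPolynomial (Fin n ⊕ ℤ) ℤ :=
  ∑ T ∈ Finset.univ.filter (IsSSYT lam),
    ∏ c : cells lam,
      (X (Sum.inl (T c)) + X (Sum.inr (ysub (T c) (c : Fin n × ℕ))))

/-- `e_d(y_1, …, y_p)`, the elementary symmetric polynomial in the variables
`y_1, …, y_p` (which is `0` for `d < 0` and for `d > p`, and `1` for `d = 0`),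
as a polynomial in the variables `y_k`, `k : ℤ`. -/
noncomputable def eY (p : ℕ) (d : ℤ) : MvPolynomial ℤ ℤ :=
  if 0 ≤ d then
    ∑ s ∈ Finset.powersetCard d.toNat ((Finset.range p).image fun k => (k + 1 : ℤ)),
      ∏ j ∈ s, X j
  else 0

/-- `h_d(-y_1, …, -y_p)`, the complete homogeneous symmetric polynomial of degree
`d` evaluated at the negated variables `-y_1, …, -y_p` (and `0` for `d < 0`). -/
noncomputable def hYneg (p : ℕ) (d : ℤ) : MvPolynomial ℤ ℤ :=
  if 0 ≤ d then
    ∑ m ∈ (Finset.range p).sym d.toNat,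
      ((m : Multiset ℕ).map fun k => -(X (k + 1 : ℤ) : MvPolynomial ℤ ℤ)).prod
  else 0

/-- The partition `λ^c ∈ P_m` complementary to `λ ∈ P_n` in the `n × m` rectangle:
`λ^c_i = n - λ'_{m+1-i}` (1-based), where `λ'_j = #{k : λ_k ≥ j}` is the conjugate. -/
noncomputable def conjComp (n m : ℕ) (lam : Fin n → ℕ) : Fin m → ℕ :=
  fun i => n - (Finset.univ.filter fun k : Fin n => m - (i : ℕ) ≤ lam k).card


/-- general factorial Schur -/
noncomputable def FS {R : Type*} [CommRing R] {n : ℕ} (lam : Fin n → ℕ) (x : Fin n → R)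
    (y : ℤ → R) : R :=
  ∑ T ∈ Finset.univ.filter (IsSSYT lam),
    ∏ c : cells lam, (x (T c) + y (ysub (T c) (c : Fin n × ℕ)))

noncomputable def fp {R : Type*} [CommRing R] (y : ℤ → R) (k : ℕ) (t : R) : R :=
  ∏ p ∈ Finset.range k, (t + y ((p : ℤ) + 1))

theorem fp_telescope {R : Type*} [CommRing R] (y : ℤ → R) (t z : R) (u w : ℕ) (h : u ≤ w) :
    fp y (w + 1) t - (∏ p ∈ Finset.Ico u (w + 1), (z + y ((p : ℤ) + 1))) * fp y u t
      = (t - z) * ∑ a ∈ Finset.Icc u w, fp y a t *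
          ∏ p ∈ Finset.Ico (a + 1) (w + 1), (z + y ((p : ℤ) + 1)) := by
  induction w, h using Nat.le_induction with
  | base => simp [fp, Finset.prod_range_succ]; ring
  | succ w h ih =>
    rw [← Finset.insert_Icc_right_eq_Icc_add_one (by omega), Finset.sum_insert (by simp)]
    have h1 : ∑ a ∈ Finset.Icc u w, fp y a t *
          ∏ p ∈ Finset.Ico (a + 1) (w + 1 + 1), (z + y ((p : ℤ) + 1))
        = (∑ a ∈ Finset.Icc u w, fp y a t *
          ∏ p ∈ Finset.Ico (a + 1) (w + 1), (z + y ((p : ℤ) + 1))) * (z + y ((w + 1 : ℕ) + 1)) := by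
      rw [Finset.sum_mul]
      refine Finset.sum_congr rfl fun a ha => ?_
      simp only [Finset.mem_Icc] at ha
      rw [Finset.prod_Ico_succ_top (by omega), mul_assoc]
    rw [h1, Finset.prod_Ico_succ_top (by omega), mul_add (t - z), ← mul_assoc (t - z) (∑ a ∈ _, _), ← ih]
    have : fp y (w + 1 + 1) t = fp y (w+1) t * (t + y ((w + 1 : ℕ) + 1)) := by
      simp [fp, Finset.prod_range_succ]
    rw [this]
    simp
    ring

theorem det_branch {R : Type*} [CommRing R] {n : ℕ} (lam : Fin (n+1) → ℕ) (hl : Antitone lam)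
    (x : Fin (n+1) → R) (y : ℤ → R) :
    Matrix.det (Matrix.of fun i j : Fin (n+1) => fp y (lam j.rev + j) (x i)) =
      ((-1)^n * ∏ i : Fin n, (x i.castSucc - x (Fin.last n))) *
      ∑ mu ∈ Fintype.piFinset (fun j : Fin n => Finset.Icc (lam j.succ) (lam j.castSucc)),
        (Matrix.det (Matrix.of fun i j : Fin n => fp y (mu j.rev + j) (x i.castSucc))) *
        ((∏ j : Fin n, ∏ c ∈ Finset.Ico (mu j) (lam j.castSucc),
          (x (Fin.last n) + y ((n : ℤ) + 1 + c - (j : ℕ)))) *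
          ∏ c ∈ Finset.range (lam (Fin.last n)), (x (Fin.last n) + y ((c : ℤ) + 1))) := by
  set z := x (Fin.last n) with hz
  set r : Fin n → R := fun j => ∏ p ∈ Finset.Ico (lam j.rev.succ + j) (lam j.rev.castSucc + j + 1),
    (z + y ((p : ℤ) + 1)) with hr
  set A : Matrix (Fin (n+1)) (Fin (n+1)) R :=
    Matrix.of fun i j : Fin (n+1) => fp y (lam j.rev + j) (x i) with hA
  let B : Matrix (Fin (n+1)) (Fin (n+1)) R :=
    Matrix.of fun i j => Fin.cases (A i 0) (fun j => A i j.succ - r j * A i j.castSucc) j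
  have hAB : A.det = B.det := by
    apply Matrix.det_eq_of_forall_col_eq_smul_add_pred r
    · intro i; simp [B]
    · intro i j; simp [B]
  have hlej : ∀ j : Fin n, lam j.succ ≤ lam j.castSucc := fun j => hl (Fin.castSucc_lt_succ).le
  have hBs : ∀ i (j : Fin n), B i j.succ = (x i - z) * ∑ a ∈ Finset.Icc (lam j.rev.succ + j) (lam j.rev.castSucc + j), fp y a (x i) *
          ∏ p ∈ Finset.Ico (a + 1) (lam j.rev.castSucc + j + 1), (z + y ((p : ℤ) + 1)) := by
    intro i j
    rw [← fp_telescope _ _ _ _ _ (by have := hlej j.rev; omega)]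
    simp [B, A, r, Fin.rev_succ, Fin.rev_castSucc, add_assoc]
  have hlast : ∀ j : Fin n, B (Fin.last n) j.succ = 0 := by
    intro j; rw [hBs, ← hz]; simp
  have hB0 : B (Fin.last n) 0 = ∏ c ∈ Finset.range (lam (Fin.last n)), (z + y ((c : ℤ) + 1)) := by
    simp [B, A, fp, hz]
  rw [hAB, Matrix.det_succ_row B (Fin.last n), Fin.sum_univ_succ]
  simp only [hlast, hB0]
  have hsub : (B.submatrix (Fin.last n).succAbove (Fin.succAbove 0)).det
      = (∏ i : Fin n, (x i.castSucc - z)) *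
        (Matrix.of fun (j i : Fin n) => ∑ a ∈ Finset.Icc (lam j.rev.succ) (lam j.rev.castSucc), 
          (fun i : Fin n => (∏ p ∈ Finset.Ico (a + j + 1) (lam j.rev.castSucc + j + 1), (z + y ((p : ℤ) + 1))) * fp y (a + j) (x i.castSucc)) i).det := by
    rw [← Matrix.det_transpose (Matrix.of _), ← Matrix.det_mul_column]
    congr 1
    ext i j
    simp only [Matrix.submatrix_apply, Fin.succAbove_last, Fin.succAbove_zero, Matrix.of_apply, Matrix.transpose_apply]
    rw [hBs]
    congr 1
    rw [← Finset.map_add_right_Icc, Finset.sum_map]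
    exact Finset.sum_congr rfl fun a _ => by simp [mul_comm]
  have hsum : (Matrix.of fun (j i : Fin n) => ∑ a ∈ Finset.Icc (lam j.rev.succ) (lam j.rev.castSucc), 
          (fun i : Fin n => (∏ p ∈ Finset.Ico (a + j + 1) (lam j.rev.castSucc + j + 1), (z + y ((p : ℤ) + 1))) * fp y (a + j) (x i.castSucc)) i).det
      = ∑ a ∈ Fintype.piFinset (fun j : Fin n => Finset.Icc (lam j.rev.succ) (lam j.rev.castSucc)),
        (∏ j : Fin n, ∏ p ∈ Finset.Ico (a j + j + 1) (lam j.rev.castSucc + j + 1), (z + y ((p : ℤ) + 1))) *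
        (Matrix.of fun (i j : Fin n) => fp y (a j + j) (x i.castSucc)).det := by
    have := (Matrix.detRowAlternating (n := Fin n) (R := R)).toMultilinearMap.map_sum_finset
      (fun (j : Fin n) (a : ℕ) => (fun i : Fin n => (∏ p ∈ Finset.Ico (a + j + 1) (lam j.rev.castSucc + j + 1), (z + y ((p : ℤ) + 1))) * fp y (a + j) (x i.castSucc)))
      (fun j : Fin n => Finset.Icc (lam j.rev.succ) (lam j.rev.castSucc))
    refine Eq.trans ?_ (this.trans ?_)
    · show _ = Matrix.det _
      congr 1
      ext j i
      simp
    · refine Finset.sum_congr rfl fun a _ => ?_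
      show Matrix.det _ = _
      rw [← Matrix.det_transpose (Matrix.of _), ← Matrix.det_mul_column]
      rfl
  rw [hsub, hsum]
  simp only [mul_zero, zero_mul, Finset.sum_const_zero, add_zero, Fin.val_last, Fin.val_zero]
  have hre : ∑ a ∈ Fintype.piFinset (fun j : Fin n => Finset.Icc (lam j.rev.succ) (lam j.rev.castSucc)),
        (∏ j : Fin n, ∏ p ∈ Finset.Ico (a j + j + 1) (lam j.rev.castSucc + j + 1), (z + y ((p : ℤ) + 1))) *
        (Matrix.of fun (i j : Fin n) => fp y (a j + j) (x i.castSucc)).det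
      = ∑ mu ∈ Fintype.piFinset (fun j : Fin n => Finset.Icc (lam j.succ) (lam j.castSucc)),
        (∏ j : Fin n, ∏ c ∈ Finset.Ico (mu j) (lam j.castSucc),
          (z + y ((n : ℤ) + 1 + c - (j : ℕ)))) * 
        (Matrix.det (Matrix.of fun i j : Fin n => fp y (mu j.rev + j) (x i.castSucc))) := by
    refine Finset.sum_nbij' (fun a j => a j.rev) (fun a j => a j.rev) ?_ ?_ ?_ ?_ ?_
    · intro a ha
      simp only [Fintype.mem_piFinset] at ha ⊢
      intro j; simpa using ha j.rev
    · intro a ha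
      simp only [Fintype.mem_piFinset] at ha ⊢
      intro j; exact ha j.rev
    · intro a _; simp
    · intro a _; simp
    · intro a _
      simp only [Fin.rev_rev]
      congr 1
      refine Fintype.prod_equiv Fin.revPerm _ _ fun j => ?_
      simp only [Fin.revPerm_apply, Fin.rev_rev]
      rw [add_assoc, add_assoc, ← Finset.prod_Ico_add']
      refine Finset.prod_congr rfl fun c _ => ?_
      congr 2
      have := j.isLt
      rw [Fin.val_rev]
      push_cast [Nat.cast_sub this]
      ring
  rw [hre]
  simp only [Finset.mul_sum]
  refine Finset.sum_congr rfl fun mu _ => ?_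
  ring

theorem mem_cells' {n : ℕ} (lam : Fin n → ℕ) (c : Fin n × ℕ) :
    c ∈ cells lam ↔ c.2 < lam c.1 := by
  simp only [cells, Finset.mem_filter, Finset.mem_product, Finset.mem_univ, true_and,
    Finset.mem_range, and_iff_right_iff_imp]
  intro h
  exact lt_of_lt_of_le h (Finset.le_sup (f := lam) (Finset.mem_univ c.1))

theorem prod_cells {R : Type*} [CommRing R] {n : ℕ} (lam : Fin n → ℕ) (g : cells lam → R) :
    ∏ c : cells lam, g c = ∏ r : Fin n, ∏ c ∈ Finset.range (lam r),
      (if h : (r, c) ∈ cells lam then g ⟨(r, c), h⟩ else 1) := by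
  rw [Finset.prod_sigma']
  refine Finset.prod_bij' (fun c _ => ⟨c.1.1, c.1.2⟩)
    (fun c hc => ⟨(c.1, c.2), (mem_cells' _ _).2 (by simpa using hc)⟩) ?_ ?_ ?_ ?_ ?_
  · intro c _
    simpa using (mem_cells' _ _).1 c.2
  · intro c _; simp
  · intro c _; simp
  · intro c _; simp
  · intro c _; simp

theorem ssyt_row_le {n : ℕ} (lam : Fin n → ℕ) (hl : Antitone lam) (T : cells lam → Fin n)
    (hT : IsSSYT lam T) : ∀ (r : ℕ) (hr : r < n) (c : ℕ) (h : ((⟨r, hr⟩ : Fin n), c) ∈ cells lam),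
      r ≤ (T ⟨(⟨r, hr⟩, c), h⟩ : ℕ) := by
  intro r
  induction r with
  | zero => intros; omega
  | succ r ih =>
    intro hr c h
    have h' : ((⟨r, by omega⟩ : Fin n), c) ∈ cells lam := by
      rw [mem_cells'] at h ⊢
      exact lt_of_lt_of_le h (hl (by simp))
    have h1 := ih (by omega) c h'
    have h2 := hT.2 ⟨_, h'⟩ ⟨_, h⟩ rfl (by simp)
    have h3 : (T ⟨_, h'⟩ : ℕ) < T ⟨_, h⟩ := h2
    omega

/-- the shape of the subtableau with letters less than the last one -/
noncomputable def subshape {n : ℕ} (lam : Fin (n+1) → ℕ) (T : cells lam → Fin (n+1)) : Fin n → ℕ :=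
  fun j => ((Finset.range (lam j.castSucc)).filter fun c =>
    ∃ h : (j.castSucc, c) ∈ cells lam, T ⟨_, h⟩ ≠ Fin.last n).card

theorem subshape_spec {n : ℕ} (lam : Fin (n+1) → ℕ) (T : cells lam → Fin (n+1))
    (hT : IsSSYT lam T) (j : Fin n) (c : ℕ) (h : (j.castSucc, c) ∈ cells lam) :
    T ⟨_, h⟩ ≠ Fin.last n ↔ c < subshape lam T j := by
  set S := (Finset.range (lam j.castSucc)).filter fun c =>
    ∃ h : (j.castSucc, c) ∈ cells lam, T ⟨_, h⟩ ≠ Fin.last n with hS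
  have hlow : ∀ a b, a ≤ b → b ∈ S → a ∈ S := by
    intro a b hab hb
    simp only [hS, Finset.mem_filter, Finset.mem_range] at hb ⊢
    obtain ⟨hb1, hb2, hb3⟩ := hb
    have ha : (j.castSucc, a) ∈ cells lam := (mem_cells' _ _).2 (by simp; omega)
    refine ⟨by omega, ha, ?_⟩
    have := hT.1 ⟨_, ha⟩ ⟨_, hb2⟩ rfl hab
    exact ne_of_lt (lt_of_le_of_lt this (lt_of_le_of_ne (Fin.le_last _) hb3))
  have hSr : S = Finset.range S.card := by
    have hsub : ∀ b ∈ S, b < S.card := by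
      intro b hb
      have : Finset.range (b+1) ⊆ S := by
        intro a ha
        exact hlow a b (by simp at ha; omega) hb
      have := Finset.card_le_card this
      simp at this; omega
    exact Finset.eq_of_subset_of_card_le (fun b hb => by simpa using hsub b hb) (by simp)
  have h1 : c ∈ S ↔ c < subshape lam T j := by
    rw [hSr]; simp [subshape, ← hS]
  rw [← h1, hS]
  simp only [Finset.mem_filter, Finset.mem_range]
  constructor
  · intro hh; exact ⟨(mem_cells' _ _).1 h, h, hh⟩
  · rintro ⟨_, _, hh⟩; exact hh

theorem subshape_le {n : ℕ} (lam : Fin (n+1) → ℕ) (T : cells lam → Fin (n+1)) (j : Fin n) :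
    subshape lam T j ≤ lam j.castSucc := by
  unfold subshape
  refine (Finset.card_filter_le _ _).trans (by simp)

theorem le_subshape {n : ℕ} (lam : Fin (n+1) → ℕ) (hl : Antitone lam) (T : cells lam → Fin (n+1))
    (hT : IsSSYT lam T) (j : Fin n) :
    lam j.succ ≤ subshape lam T j := by
  by_contra hc
  push Not at hc
  have h1 : (j.succ, subshape lam T j) ∈ cells lam := (mem_cells' _ _).2 hc
  have h2 : (j.castSucc, subshape lam T j) ∈ cells lam :=
    (mem_cells' _ _).2 (lt_of_lt_of_le hc (hl Fin.castSucc_lt_succ.le))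
  have := hT.2 ⟨_, h2⟩ ⟨_, h1⟩ rfl Fin.castSucc_lt_succ
  have h3 := (subshape_spec lam T hT j _ h2).1 (ne_of_lt (lt_of_lt_of_le this (Fin.le_last _)))
  omega

noncomputable def restr {n : ℕ} (lam : Fin (n+1) → ℕ) (mu : Fin n → ℕ)
    (T : cells lam → Fin (n+1)) : cells mu → Fin n :=
  fun c => if h : ∃ h : (c.1.1.castSucc, c.1.2) ∈ cells lam, T ⟨_, h⟩ ≠ Fin.last n then
    (T ⟨_, h.1⟩).castPred h.2 else c.1.1

noncomputable def exten {n : ℕ} (lam : Fin (n+1) → ℕ) (mu : Fin n → ℕ)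
    (T : cells mu → Fin n) : cells lam → Fin (n+1) :=
  fun c => if h : ∃ j : Fin n, c.1.1 = j.castSucc ∧ (j, c.1.2) ∈ cells mu then
    (T ⟨_, h.choose_spec.2⟩).castSucc else Fin.last n

theorem exten_of_mem {n : ℕ} (lam : Fin (n+1) → ℕ) (mu : Fin n → ℕ)
    (T : cells mu → Fin n) (j : Fin n) (c : ℕ) (h : (j.castSucc, c) ∈ cells lam)
    (h' : (j, c) ∈ cells mu) : exten lam mu T ⟨_, h⟩ = (T ⟨_, h'⟩).castSucc := by
  have hh : ∃ j' : Fin n, j.castSucc = j'.castSucc ∧ (j', c) ∈ cells mu := ⟨j, rfl, h'⟩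
  unfold exten
  rw [dif_pos hh]
  have := Fin.castSucc_injective _ hh.choose_spec.1
  congr 3
  exact Prod.ext this.symm rfl

theorem exten_of_not_mem {n : ℕ} (lam : Fin (n+1) → ℕ) (mu : Fin n → ℕ)
    (T : cells mu → Fin n) (j : Fin n) (c : ℕ) (h : (j.castSucc, c) ∈ cells lam)
    (h' : (j, c) ∉ cells mu) : exten lam mu T ⟨_, h⟩ = Fin.last n := by
  unfold exten
  rw [dif_neg]
  rintro ⟨j', h1, h2⟩
  rw [Fin.castSucc_injective _ h1] at h'
  exact h' h2

theorem exten_last {n : ℕ} (lam : Fin (n+1) → ℕ) (mu : Fin n → ℕ)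
    (T : cells mu → Fin n) (c : ℕ) (h : (Fin.last n, c) ∈ cells lam) :
    exten lam mu T ⟨_, h⟩ = Fin.last n := by
  unfold exten
  rw [dif_neg]
  rintro ⟨j', h1, h2⟩
  exact (Fin.castSucc_lt_last j').ne h1.symm

theorem exten_ssyt {n : ℕ} (lam : Fin (n+1) → ℕ) (hl : Antitone lam) (mu : Fin n → ℕ)
    (hmu : Antitone mu) (h1 : ∀ j, lam j.succ ≤ mu j)
    (T : cells mu → Fin n) (hT : IsSSYT mu T) : IsSSYT lam (exten lam mu T) := by
  constructor
  · rintro ⟨⟨r, c⟩, hc⟩ ⟨⟨r', c'⟩, hc'⟩ (rfl : r = r') (hle : c ≤ c')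
    induction r using Fin.lastCases with
    | last => rw [exten_last, exten_last]
    | cast j =>
      by_cases hm : (j, c') ∈ cells mu
      · have hm' : (j, c) ∈ cells mu := by
          rw [mem_cells'] at hm ⊢; exact lt_of_le_of_lt hle hm
        rw [exten_of_mem _ _ _ _ _ _ hm, exten_of_mem _ _ _ _ _ _ hm']
        exact hT.1 ⟨_, hm'⟩ ⟨_, hm⟩ rfl hle
      · rw [exten_of_not_mem _ _ _ _ _ hc' hm]
        exact Fin.le_last _
  · rintro ⟨⟨r, c⟩, hc⟩ ⟨⟨r', c'⟩, hc'⟩ (rfl : c = c') (hlt : r < r')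
    induction r using Fin.lastCases with
    | last => exact absurd hlt (not_lt.2 (Fin.le_last _))
    | cast j =>
      have hm' : (j, c) ∈ cells mu := by
        rw [mem_cells'] at hc' ⊢
        refine lt_of_lt_of_le hc' (le_trans (hl ?_) (h1 j))
        exact Nat.succ_le_of_lt hlt
      rw [exten_of_mem _ _ _ _ _ hc hm']
      induction r' using Fin.lastCases with
      | last => rw [exten_last]; exact Fin.castSucc_lt_last _
      | cast j' =>
        by_cases hm : (j', c) ∈ cells mu
        · rw [exten_of_mem _ _ _ _ _ _ hm]
          exact hT.2 ⟨_, hm'⟩ ⟨_, hm⟩ rfl hlt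
        · rw [exten_of_not_mem _ _ _ _ _ hc' hm]
          exact Fin.castSucc_lt_last _

theorem subshape_exten {n : ℕ} (lam : Fin (n+1) → ℕ) (mu : Fin n → ℕ)
    (h2 : ∀ j, mu j ≤ lam j.castSucc)
    (T : cells mu → Fin n) : subshape lam (exten lam mu T) = mu := by
  funext j
  have : ((Finset.range (lam j.castSucc)).filter fun c =>
    ∃ h : (j.castSucc, c) ∈ cells lam, exten lam mu T ⟨_, h⟩ ≠ Fin.last n) = Finset.range (mu j) := by
    ext c
    simp only [Finset.mem_filter, Finset.mem_range]
    constructor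
    · rintro ⟨_, h, h'⟩
      by_contra hc
      exact h' (exten_of_not_mem _ _ _ _ _ h (by rwa [mem_cells']))
    · intro h
      have hc : (j.castSucc, c) ∈ cells lam := (mem_cells' _ _).2 (lt_of_lt_of_le h (h2 j))
      refine ⟨(mem_cells' _ _).1 hc, hc, ?_⟩
      rw [exten_of_mem _ _ _ _ _ hc ((mem_cells' _ _).2 h)]
      exact (Fin.castSucc_lt_last _).ne
  unfold subshape
  rw [this, Finset.card_range]

theorem restr_castSucc {n : ℕ} (lam : Fin (n+1) → ℕ)
    (T : cells lam → Fin (n+1)) (hT : IsSSYT lam T) (j : Fin n) (c : ℕ)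
    (h : (j.castSucc, c) ∈ cells lam) (h' : (j, c) ∈ cells (subshape lam T)) :
    (restr lam (subshape lam T) T ⟨_, h'⟩).castSucc = T ⟨_, h⟩ := by
  have h1 := (subshape_spec lam T hT j c h).2 ((mem_cells' _ _).1 h')
  have hh : ∃ h : (j.castSucc, c) ∈ cells lam, T ⟨_, h⟩ ≠ Fin.last n := ⟨h, h1⟩
  unfold restr
  rw [dif_pos hh, Fin.castSucc_castPred]

theorem mem_of_mem_subshape {n : ℕ} (lam : Fin (n+1) → ℕ)
    (T : cells lam → Fin (n+1)) (j : Fin n) (c : ℕ)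
    (h' : (j, c) ∈ cells (subshape lam T)) : (j.castSucc, c) ∈ cells lam :=
  (mem_cells' _ _).2 (lt_of_lt_of_le ((mem_cells' (subshape lam T) (j, c)).1 h') (subshape_le lam T j))

theorem restr_ssyt {n : ℕ} (lam : Fin (n+1) → ℕ)
    (T : cells lam → Fin (n+1)) (hT : IsSSYT lam T) :
    IsSSYT (subshape lam T) (restr lam (subshape lam T) T) := by
  constructor
  · rintro ⟨⟨r, c⟩, hc⟩ ⟨⟨r', c'⟩, hc'⟩ hr hle
    rw [← Fin.castSucc_le_castSucc_iff, restr_castSucc lam T hT _ _ (mem_of_mem_subshape _ _ _ _ hc),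
      restr_castSucc lam T hT _ _ (mem_of_mem_subshape _ _ _ _ hc')]
    exact hT.1 _ _ (congrArg Fin.castSucc hr) hle
  · rintro ⟨⟨r, c⟩, hc⟩ ⟨⟨r', c'⟩, hc'⟩ hr hle
    rw [← Fin.castSucc_lt_castSucc_iff, restr_castSucc lam T hT _ _ (mem_of_mem_subshape _ _ _ _ hc),
      restr_castSucc lam T hT _ _ (mem_of_mem_subshape _ _ _ _ hc')]
    exact hT.2 _ _ hr hle

theorem exten_restr {n : ℕ} (lam : Fin (n+1) → ℕ) (hl : Antitone lam)
    (T : cells lam → Fin (n+1)) (hT : IsSSYT lam T) :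
    exten lam (subshape lam T) (restr lam (subshape lam T) T) = T := by
  funext ⟨⟨r, c⟩, hc⟩
  induction r using Fin.lastCases with
  | last =>
    rw [exten_last]
    have := ssyt_row_le lam hl T hT n (by omega) c hc
    exact (Fin.last_le_iff.1 this).symm
  | cast j =>
    by_cases hm : (j, c) ∈ cells (subshape lam T)
    · rw [exten_of_mem _ _ _ _ _ hc hm, restr_castSucc lam T hT _ _ hc]
    · rw [exten_of_not_mem _ _ _ _ _ hc hm]
      by_contra hne
      exact hm ((mem_cells' _ _).2 ((subshape_spec lam T hT j c hc).1 (Ne.symm hne)))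

theorem restr_exten {n : ℕ} (lam : Fin (n+1) → ℕ) (mu : Fin n → ℕ)
    (h2 : ∀ j, mu j ≤ lam j.castSucc)
    (T : cells mu → Fin n) : restr lam mu (exten lam mu T) = T := by
  funext ⟨⟨j, c⟩, h⟩
  have hc : (j.castSucc, c) ∈ cells lam := (mem_cells' _ _).2 (lt_of_lt_of_le ((mem_cells' mu (j, c)).1 h) (h2 j))
  have he := exten_of_mem lam mu T _ _ hc h
  have hh : ∃ h : (j.castSucc, c) ∈ cells lam, exten lam mu T ⟨_, h⟩ ≠ Fin.last n :=
    ⟨hc, by rw [he]; exact (Fin.castSucc_lt_last _).ne⟩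
  unfold restr
  rw [dif_pos hh]
  apply Fin.castSucc_injective
  rw [Fin.castSucc_castPred, he]

theorem prod_exten {R : Type*} [CommRing R] {n : ℕ} (lam : Fin (n+1) → ℕ) (mu : Fin n → ℕ)
    (h2 : ∀ j, mu j ≤ lam j.castSucc) (x : Fin (n+1) → R) (y : ℤ → R)
    (T : cells mu → Fin n) :
    ∏ c : cells lam, (x (exten lam mu T c) + y (ysub (exten lam mu T c) (c : Fin (n+1) × ℕ)))
    = (∏ c : cells mu, (x (T c).castSucc + y (ysub (T c) (c : Fin n × ℕ)))) *
       ((∏ j : Fin n, ∏ c ∈ Finset.Ico (mu j) (lam j.castSucc),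
          (x (Fin.last n) + y ((n : ℤ) + 1 + c - (j : ℕ)))) *
          ∏ c ∈ Finset.range (lam (Fin.last n)), (x (Fin.last n) + y ((c : ℤ) + 1))) := by
  rw [prod_cells, prod_cells, Fin.prod_univ_castSucc, ← mul_assoc, ← Finset.prod_mul_distrib]
  congr 1
  · refine Finset.prod_congr rfl fun j _ => ?_
    rw [← Finset.prod_range_mul_prod_Ico _ (h2 j)]
    congr 1
    · refine Finset.prod_congr rfl fun c hc => ?_
      have h : (j, c) ∈ cells mu := (mem_cells' _ _).2 (by simpa using hc)
      have h' : (j.castSucc, c) ∈ cells lam :=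
        (mem_cells' _ _).2 (lt_of_lt_of_le ((mem_cells' mu (j, c)).1 h) (h2 j))
      rw [dif_pos h, dif_pos h', exten_of_mem _ _ _ _ _ h' h]
      simp [ysub]
    · refine Finset.prod_congr rfl fun c hc => ?_
      rw [Finset.mem_Ico] at hc
      have h : (j, c) ∉ cells mu := by rw [mem_cells']; simp; omega
      have h' : (j.castSucc, c) ∈ cells lam :=
        (mem_cells' _ _).2 hc.2
      rw [dif_pos h', exten_of_not_mem _ _ _ _ _ h' h]
      simp [ysub]
  · refine Finset.prod_congr rfl fun c hc => ?_
    have h' : (Fin.last n, c) ∈ cells lam := (mem_cells' _ _).2 (by simpa using hc)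
    rw [dif_pos h', exten_last]
    simp only [ysub, Fin.val_last]
    congr 2
    ring

theorem box_antitone {n : ℕ} (lam : Fin (n+1) → ℕ) (hl : Antitone lam) (mu : Fin n → ℕ)
    (h1 : ∀ j, lam j.succ ≤ mu j) (h2 : ∀ j, mu j ≤ lam j.castSucc) : Antitone mu := by
  intro i j hij
  rcases hij.eq_or_lt with rfl | h
  · rfl
  · exact (h2 j).trans ((hl (by rw [Fin.le_def]; simp; exact h)).trans (h1 i))

theorem FS_branch {R : Type*} [CommRing R] {n : ℕ} (lam : Fin (n+1) → ℕ) (hl : Antitone lam)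
    (x : Fin (n+1) → R) (y : ℤ → R) :
    FS lam x y =
      ∑ mu ∈ Fintype.piFinset (fun j : Fin n => Finset.Icc (lam j.succ) (lam j.castSucc)),
        FS mu (fun i => x i.castSucc) y *
        ((∏ j : Fin n, ∏ c ∈ Finset.Ico (mu j) (lam j.castSucc),
          (x (Fin.last n) + y ((n : ℤ) + 1 + c - (j : ℕ)))) *
          ∏ c ∈ Finset.range (lam (Fin.last n)), (x (Fin.last n) + y ((c : ℤ) + 1))) := by
  rw [FS, ← Finset.sum_fiberwise_of_maps_to (g := subshape lam)
    (t := Fintype.piFinset (fun j : Fin n => Finset.Icc (lam j.succ) (lam j.castSucc)))]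
  · refine Finset.sum_congr rfl fun mu hmu => ?_
    simp only [Fintype.mem_piFinset, Finset.mem_Icc] at hmu
    have h1 := fun j => (hmu j).1
    have h2 := fun j => (hmu j).2
    rw [FS, Finset.sum_mul]
    refine Finset.sum_bij' (fun T _ => restr lam mu T) (fun T _ => exten lam mu T) ?_ ?_ ?_ ?_ ?_
    · intro T hT
      simp only [Finset.mem_filter, Finset.mem_univ, true_and] at hT ⊢
      obtain ⟨hT, rfl⟩ := hT
      exact restr_ssyt lam T hT
    · intro T hT
      simp only [Finset.mem_filter, Finset.mem_univ, true_and] at hT ⊢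
      exact ⟨exten_ssyt lam hl mu (box_antitone lam hl mu h1 h2) h1 T hT, subshape_exten lam mu h2 T⟩
    · intro T hT
      simp only [Finset.mem_filter, Finset.mem_univ, true_and] at hT ⊢
      obtain ⟨hT, rfl⟩ := hT
      exact exten_restr lam hl T hT
    · intro T hT
      exact restr_exten lam mu h2 T
    · intro T hT
      simp only [Finset.mem_filter, Finset.mem_univ, true_and] at hT ⊢
      obtain ⟨hT, rfl⟩ := hT
      rw [← prod_exten lam _ h2, exten_restr lam hl T hT]
  · intro T hT
    simp only [Finset.mem_filter, Finset.mem_univ, true_and] at hT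
    simp only [Fintype.mem_piFinset, Finset.mem_Icc]
    exact fun j => ⟨le_subshape lam hl T hT j, subshape_le lam T j⟩

theorem bialternant {R : Type*} [CommRing R] (n : ℕ) : ∀ (x : Fin n → R), ∃ V : R,
    ∀ (y : ℤ → R) (lam : Fin n → ℕ), Antitone lam →
    Matrix.det (Matrix.of fun i j : Fin n => fp y (lam j.rev + j) (x i)) = V * FS lam x y := by
  induction n with
  | zero =>
    intro x
    refine ⟨1, fun y lam _ => ?_⟩
    have : ∀ T : cells lam → Fin 0, IsSSYT lam T := fun T =>
      ⟨fun c => c.1.1.elim0, fun c => c.1.1.elim0⟩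
    have he : IsEmpty (cells lam) := ⟨fun c => c.1.1.elim0⟩
    simp [FS, this]
  | succ n ih =>
    intro x
    obtain ⟨V, hV⟩ := ih (fun i => x i.castSucc)
    refine ⟨((-1)^n * ∏ i : Fin n, (x i.castSucc - x (Fin.last n))) * V, fun y lam hl => ?_⟩
    rw [det_branch lam hl, FS_branch lam hl, mul_assoc _ V, Finset.mul_sum _ _ V]
    congr 1
    refine Finset.sum_congr rfl fun mu hmu => ?_
    simp only [Fintype.mem_piFinset, Finset.mem_Icc] at hmu
    rw [hV y mu (box_antitone lam hl mu (fun j => (hmu j).1) (fun j => (hmu j).2)), mul_assoc V]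

noncomputable def Nco {A : Type*} [CommRing A] (y : ℤ → A) : ℕ → ℕ → A
  | 0, k => if k = 0 then 1 else 0
  | l+1, 0 => - (y 1 * Nco y l 0)
  | l+1, k+1 => Nco y l k - y ((k : ℤ) + 2) * Nco y l (k+1)

noncomputable def psi {A : Type*} [CommRing A] (g : ℕ → A) : Polynomial A →ₗ[A] A :=
  Polynomial.lsum (fun l => (LinearMap.id : A →ₗ[A] A).smulRight (g l))

theorem psi_monomial {A : Type*} [CommRing A] (g : ℕ → A) (l : ℕ) (a : A) :
    psi g (Polynomial.monomial l a) = a * g l := by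
  simp [psi, Polynomial.lsum_apply, Polynomial.sum_monomial_index]

noncomputable def fpoly {A : Type*} [CommRing A] (y : ℤ → A) (k : ℕ) : Polynomial A :=
  fp (fun i => Polynomial.C (y i)) k Polynomial.X

theorem fpoly_succ {A : Type*} [CommRing A] (y : ℤ → A) (k : ℕ) :
    fpoly y (k+1) = Polynomial.X * fpoly y k + Polynomial.C (y ((k : ℤ) + 1)) * fpoly y k := by
  simp [fpoly, fp, Finset.prod_range_succ]; ring

theorem fpoly_zero {A : Type*} [CommRing A] (y : ℤ → A) : fpoly y 0 = 1 := by
  simp [fpoly, fp]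

theorem psi_X_zero {A : Type*} [CommRing A] (y : ℤ → A) (p : Polynomial A) :
    psi (fun l => Nco y l 0) (Polynomial.X * p) = - (y 1 * psi (fun l => Nco y l 0) p) := by
  induction p using Polynomial.induction_on' with
  | add p q hp hq => rw [mul_add, map_add, map_add, hp, hq]; ring
  | monomial l a => rw [Polynomial.X_mul_monomial, psi_monomial, psi_monomial, Nco]; ring

theorem psi_X_succ {A : Type*} [CommRing A] (y : ℤ → A) (k : ℕ) (p : Polynomial A) :
    psi (fun l => Nco y l (k+1)) (Polynomial.X * p) =
      psi (fun l => Nco y l k) p - y ((k : ℤ) + 2) * psi (fun l => Nco y l (k+1)) p := by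
  induction p using Polynomial.induction_on' with
  | add p q hp hq => rw [mul_add, map_add, map_add, map_add, hp, hq]; ring
  | monomial l a => 
    rw [Polynomial.X_mul_monomial, psi_monomial, psi_monomial, psi_monomial, Nco]; ring

theorem psi_fpoly {A : Type*} [CommRing A] (y : ℤ → A) (j : ℕ) : ∀ k : ℕ,
    psi (fun l => Nco y l k) (fpoly y j) = if j = k then 1 else 0 := by
  induction j with
  | zero =>
    intro k
    rw [fpoly_zero, ← Polynomial.monomial_zero_one, psi_monomial, Nco]
    simp [eq_comm]
  | succ j ih =>
    intro k
    rw [fpoly_succ, map_add, ← Polynomial.smul_eq_C_mul, map_smul]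
    cases k with
    | zero =>
      rw [psi_X_zero, ih]
      by_cases h : j = 0
      · subst h; simp
      · simp [h]
    | succ k =>
      rw [psi_X_succ, ih, ih]
      by_cases h : j = k + 1
      · subst h; simp; ring_nf
      · simp [h]

theorem Nco_zero {A : Type*} [CommRing A] (l : ℕ) : ∀ k : ℕ,
    Nco (fun _ => (0 : A)) l k = if l = k then 1 else 0 := by
  induction l with
  | zero => intro k; simp [Nco, eq_comm]
  | succ l ih =>
    intro k
    cases k with
    | zero => simp [Nco]
    | succ k => simp [Nco, ih]

theorem psi_eq_sum {A : Type*} [CommRing A] (g : ℕ → A) (p : Polynomial A) (N : ℕ)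
    (h : p.natDegree < N) : psi g p = ∑ l ∈ Finset.range N, p.coeff l * g l := by
  simp only [psi, Polynomial.lsum_apply]
  rw [Polynomial.sum_over_range' _ (by simp) N h]
  simp

theorem psi_zero_coeff {A : Type*} [CommRing A] (k : ℕ) (p : Polynomial A) :
    psi (fun l => Nco (fun _ => (0 : A)) l k) p = p.coeff k := by
  induction p using Polynomial.induction_on' with
  | add p q hp hq => rw [map_add, hp, hq, Polynomial.coeff_add]
  | monomial l a => rw [psi_monomial, Nco_zero, Polynomial.coeff_monomial]; simp

noncomputable def Phi {A : Type*} [CommRing A] {n : ℕ} (G : Fin n → ℕ → A) :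
    MvPolynomial (Fin n) A →ₗ[A] A :=
  (MvPolynomial.basisMonomials (Fin n) A).constr A (fun m => ∏ i, G i (m i))

theorem Phi_monomial {A : Type*} [CommRing A] {n : ℕ} (G : Fin n → ℕ → A) (m : Fin n →₀ ℕ) (a : A) :
    Phi G (MvPolynomial.monomial m a) = a * ∏ i, G i (m i) := by
  have : MvPolynomial.monomial m a = a • MvPolynomial.basisMonomials (Fin n) A m := by
    simp [MvPolynomial.coe_basisMonomials, MvPolynomial.smul_monomial]
  rw [this, map_smul, Phi, Module.Basis.constr_basis, smul_eq_mul]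

theorem Phi_prod {A : Type*} [CommRing A] {n : ℕ} (G : Fin n → ℕ → A) (p : Fin n → Polynomial A) :
    Phi G (∏ i, Polynomial.aeval (MvPolynomial.X i) (p i)) = ∏ i, psi (G i) (p i) := by
  have h1 : ∀ i, Polynomial.aeval (MvPolynomial.X i : MvPolynomial (Fin n) A) (p i)
      = ∑ a ∈ Finset.range ((p i).natDegree + 1), MvPolynomial.C ((p i).coeff a) * MvPolynomial.X i ^ a := by
    intro i
    rw [Polynomial.aeval_eq_sum_range]
    simp [MvPolynomial.smul_eq_C_mul]
  simp only [h1]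
  have h2 : ∀ i, psi (G i) (p i) = ∑ a ∈ Finset.range ((p i).natDegree + 1), (p i).coeff a * G i a :=
    fun i => psi_eq_sum _ _ _ (by omega)
  simp only [h2]
  rw [Finset.prod_univ_sum, Finset.prod_univ_sum, map_sum]
  refine Finset.sum_congr rfl fun a _ => ?_
  have : ∏ i, (MvPolynomial.C ((p i).coeff (a i)) * MvPolynomial.X i ^ (a i) : MvPolynomial (Fin n) A)
      = MvPolynomial.monomial (Finsupp.equivFunOnFinite.symm a) (∏ i, (p i).coeff (a i)) := by
    rw [MvPolynomial.monomial_eq, Finset.prod_mul_distrib, map_prod, Finsupp.prod_fintype _ _ (by simp)]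
    simp
  rw [this, Phi_monomial, Finset.prod_mul_distrib]
  simp

theorem Phi_det {A : Type*} [CommRing A] {n : ℕ} (G : Fin n → ℕ → A) (q : Fin n → Polynomial A) :
    Phi G (Matrix.det (Matrix.of fun i j : Fin n => Polynomial.aeval (MvPolynomial.X i) (q j)))
    = Matrix.det (Matrix.of fun i j : Fin n => psi (G i) (q j)) := by
  rw [← Matrix.det_transpose, Matrix.det_apply, ← Matrix.det_transpose, Matrix.det_apply, map_sum]
  refine Finset.sum_congr rfl fun σ _ => ?_
  rw [Units.smul_def, Units.smul_def, map_zsmul]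
  congr 1
  exact Phi_prod G (fun i => q (σ i))

theorem fp_X {A : Type*} [CommRing A] {n : ℕ} (y : ℤ → A) (k : ℕ) (i : Fin n) :
    fp (fun j => MvPolynomial.C (y j)) k (MvPolynomial.X i : MvPolynomial (Fin n) A)
      = Polynomial.aeval (MvPolynomial.X i) (fpoly y k) := by
  simp [fpoly, fp, MvPolynomial.algebraMap_eq]

theorem beta_strictMono {n : ℕ} (lam : Fin n → ℕ) (hl : Antitone lam) :
    StrictMono (fun j : Fin n => lam j.rev + j) := by
  intro i j hij
  have h1 : lam i.rev ≤ lam j.rev := hl (Fin.rev_le_rev.2 hij.le)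
  have h2 : (i : ℕ) < j := hij
  show lam i.rev + i < lam j.rev + j
  omega

theorem det_delta {A : Type*} [CommRing A] {n : ℕ} (nu mu : Fin n → ℕ) (hn : Antitone nu)
    (hm : Antitone mu) :
    Matrix.det (Matrix.of fun i j : Fin n => if nu j.rev + j = mu i.rev + i then (1 : A) else 0)
      = if nu = mu then 1 else 0 := by
  have sn := beta_strictMono nu hn
  have sm := beta_strictMono mu hm
  split_ifs with h
  · subst h
    rw [← Matrix.det_one (n := Fin n) (R := A)]
    congr 1
    ext i j
    simp only [Matrix.of_apply, Matrix.one_apply]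
    have : (nu j.rev + j = nu i.rev + i) ↔ i = j :=
      ⟨fun h => (sn.injective h).symm, fun h => by rw [h]⟩
    simp [this]
  · by_cases hc : ∀ i : Fin n, ∃ j : Fin n, nu j.rev + j = mu i.rev + i
    · exfalso
      apply h
      choose f hf using hc
      have finj : Function.Injective f := by
        intro a b hab
        apply sm.injective
        show mu a.rev + a = mu b.rev + b
        rw [← hf, ← hf, hab]
      have fsurj := Finite.surjective_of_injective finj
      have hr : Set.range (fun j : Fin n => nu j.rev + (j : ℕ)) = Set.range (fun j : Fin n => mu j.rev + (j : ℕ)) := by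
        ext v
        constructor
        · rintro ⟨j, rfl⟩
          obtain ⟨i, rfl⟩ := fsurj j
          exact ⟨i, (hf i).symm⟩
        · rintro ⟨i, rfl⟩
          exact ⟨f i, hf i⟩
      have := (StrictMono.range_inj sn sm).1 hr
      funext j
      have := congrFun this j.rev
      simpa using this
    · push Not at hc
      obtain ⟨i, hi⟩ := hc
      apply Matrix.det_eq_zero_of_row_eq_zero i
      intro j
      simp [hi j]

theorem extract {A : Type*} [CommRing A] {n : ℕ} (ya yb : ℤ → A) (lam mu : Fin n → ℕ)
    (hl : Antitone lam) (hm : Antitone mu)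
    (d : (Fin n → ℕ) →₀ A) (hd : ∀ ν, d ν ≠ 0 → Antitone ν)
    (h : FS lam (fun i => (MvPolynomial.X i : MvPolynomial (Fin n) A)) (fun j => MvPolynomial.C (ya j))
      = d.sum fun ν p => MvPolynomial.C p *
        FS ν (fun i => (MvPolynomial.X i : MvPolynomial (Fin n) A)) (fun j => MvPolynomial.C (yb j))) :
    d mu = Matrix.det (Matrix.of fun i j : Fin n =>
      psi (fun l => Nco yb l (mu i.rev + i)) (fpoly ya (lam j.rev + j))) := by
  obtain ⟨V, hV⟩ := bialternant n (fun i => (MvPolynomial.X i : MvPolynomial (Fin n) A))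
  have h1 := congrArg (fun p => Phi (fun i l => Nco yb l (mu i.rev + i)) (V * p)) h
  rw [← hV _ lam hl, Finsupp.sum, Finset.mul_sum, map_sum] at h1
  simp only [fp_X] at h1
  rw [Phi_det] at h1
  rw [h1]
  have h2 : ∀ ν ∈ d.support, Phi (fun i l => Nco yb l (mu i.rev + i)) (V * (MvPolynomial.C (d ν) *
        FS ν (fun i => (MvPolynomial.X i : MvPolynomial (Fin n) A)) (fun j => MvPolynomial.C (yb j))))
        = if ν = mu then d ν else 0 := by
    intro ν hν
    have hνa := hd ν (Finsupp.mem_support_iff.1 hν)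
    rw [mul_left_comm, ← hV _ ν hνa, ← MvPolynomial.smul_eq_C_mul, map_smul]
    simp only [fp_X]
    rw [Phi_det]
    simp only [psi_fpoly]
    rw [det_delta ν mu hνa hm]
    simp
  rw [Finset.sum_congr rfl h2, Finset.sum_ite_eq']
  split_ifs with hs
  · rfl
  · simpa using hs

theorem fpoly_natDegree_le {A : Type*} [CommRing A] (y : ℤ → A) (k : ℕ) :
    (fpoly y k).natDegree ≤ k := by
  unfold fpoly fp
  refine (Polynomial.natDegree_prod_le _ _).trans ?_
  refine (Finset.sum_le_card_nsmul _ _ 1 fun i _ => ?_).trans (by simp)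
  exact (Polynomial.natDegree_add_le _ _).trans (by simp [Polynomial.natDegree_X_le])

theorem fpoly_coeff_self {A : Type*} [CommRing A] (y : ℤ → A) (k : ℕ) :
    (fpoly y k).coeff k = 1 := by
  induction k with
  | zero => simp [fpoly_zero]
  | succ k ih =>
    rw [fpoly_succ, Polynomial.coeff_add, Polynomial.coeff_X_mul, ih, Polynomial.coeff_C_mul,
      Polynomial.coeff_eq_zero_of_natDegree_lt (lt_of_le_of_lt (fpoly_natDegree_le y k) (by omega))]
    simp

theorem fpoly_coeff_neg (k : ℕ) : ∀ l : ℕ,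
    aeval (fun j : ℤ => -(X j : MvPolynomial ℤ ℤ))
      ((fpoly (fun j : ℤ => (X j : MvPolynomial ℤ ℤ)) k).coeff l)
    = (-1)^(k+l) * (fpoly (fun j : ℤ => (X j : MvPolynomial ℤ ℤ)) k).coeff l := by
  induction k with
  | zero =>
    intro l
    rw [fpoly_zero, Polynomial.coeff_one]
    split_ifs with h
    · subst h; simp
    · simp
  | succ k ih =>
    intro l
    rw [fpoly_succ, Polynomial.coeff_add, Polynomial.coeff_C_mul]
    cases l with
    | zero =>
      rw [Polynomial.coeff_X_mul_zero, map_add, map_mul, ih, aeval_X, map_zero]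
      ring
    | succ l =>
      rw [Polynomial.coeff_X_mul, map_add, map_mul, ih, ih, aeval_X]
      ring

noncomputable def Mmat {A : Type*} [CommRing A] (y : ℤ → A) (N : ℕ) : Matrix (Fin N) (Fin N) A :=
  Matrix.of fun k l => (fpoly y k).coeff l

noncomputable def Nmat {A : Type*} [CommRing A] (y : ℤ → A) (N : ℕ) : Matrix (Fin N) (Fin N) A :=
  Matrix.of fun l k => Nco y l k

theorem Mmat_mul_Nmat {A : Type*} [CommRing A] (y : ℤ → A) (N : ℕ) :
    Mmat y N * Nmat y N = 1 := by
  ext k j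
  rw [Matrix.mul_apply, Matrix.one_apply]
  have h := psi_fpoly y k j
  rw [psi_eq_sum _ _ N (lt_of_le_of_lt (fpoly_natDegree_le y k) k.2), Finset.sum_range] at h
  simp only [Mmat, Nmat, Matrix.of_apply]
  rw [h]
  simp [Fin.ext_iff]

theorem Mmat_det {A : Type*} [CommRing A] (y : ℤ → A) (N : ℕ) : (Mmat y N).det = 1 := by
  rw [Matrix.det_of_isLowerTriangular]
  · simp [Mmat, fpoly_coeff_self]
  · intro i j hij
    simp only [Mmat, Matrix.of_apply]
    apply Polynomial.coeff_eq_zero_of_natDegree_lt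
    have h1 := fpoly_natDegree_le y (i : ℕ)
    have h2 : (i : ℕ) < j := hij
    omega

theorem jacobi {A : Type*} [CommRing A] {n m N : ℕ} (M M' : Matrix (Fin N) (Fin N) A)
    (h : M * M' = 1) (e f : Fin n ⊕ Fin m ≃ Fin N) :
    (M.submatrix f e).det * (M'.submatrix (e ∘ Sum.inl) (f ∘ Sum.inl)).det =
      (M.submatrix (f ∘ Sum.inr) (e ∘ Sum.inr)).det := by
  set P := M.submatrix f e with hP
  set Q := M'.submatrix e f with hQ
  have hPQ : P * Q = 1 := by
    rw [hP, hQ, Matrix.submatrix_mul_equiv, h, Matrix.submatrix_one_equiv]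
  rw [← Matrix.fromBlocks_toBlocks P, ← Matrix.fromBlocks_toBlocks Q, Matrix.fromBlocks_multiply,
    ← Matrix.fromBlocks_one, Matrix.fromBlocks_inj] at hPQ
  obtain ⟨h1, -, h3, -⟩ := hPQ
  have hmul : P * Matrix.fromBlocks Q.toBlocks₁₁ 0 Q.toBlocks₂₁ 1
      = Matrix.fromBlocks 1 P.toBlocks₁₂ 0 P.toBlocks₂₂ := by
    conv_lhs => rw [← Matrix.fromBlocks_toBlocks P]
    rw [Matrix.fromBlocks_multiply, h1, h3]
    simp
  have hdet := congrArg Matrix.det hmul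
  rw [Matrix.det_mul, Matrix.det_fromBlocks_zero₁₂, Matrix.det_fromBlocks_zero₂₁, Matrix.det_one,
    Matrix.det_one, mul_one, one_mul] at hdet
  exact hdet

theorem sign_shuffle {n m : ℕ} (e : Fin n ⊕ Fin m ≃ Fin (n + m))
    (h1 : StrictMono (e ∘ Sum.inl)) (h2 : StrictMono (e ∘ Sum.inr)) :
    Equiv.Perm.sign (finSumFinEquiv.symm.trans e) =
      (∏ b : Fin m, ((-1 : ℤˣ) ^ n * (-1) ^ (b : ℕ))) * ∏ b : Fin m, (-1 : ℤˣ) ^ (e (Sum.inr b) : ℕ) := by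
  rw [Equiv.Perm.sign_eq_prod_prod_Iio]
  have hIio : ∀ j : Fin (n+m), Finset.Iio j = Finset.univ.filter (fun i => i < j) := by
    intro j; ext; simp
  simp only [hIio, Finset.prod_filter]
  rw [Fin.prod_univ_add]
  simp only [Fin.prod_univ_add, Equiv.trans_apply, finSumFinEquiv_symm_apply_castAdd,
    finSumFinEquiv_symm_apply_natAdd]
  have hA : ∀ a a' : Fin n, (if Fin.castAdd m a < Fin.castAdd m a' then
      (if e (Sum.inl a) < e (Sum.inl a') then (1 : ℤˣ) else -1) else 1) = 1 := by
    intro a a'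
    split_ifs with h h' <;> try rfl
    exact absurd (h1 (show a < a' from h)) h'
  have hB : ∀ b b' : Fin m, (if Fin.natAdd n b < Fin.natAdd n b' then
      (if e (Sum.inr b) < e (Sum.inr b') then (1 : ℤˣ) else -1) else 1) = 1 := by
    intro a a'
    split_ifs with h h' <;> try rfl
    exact absurd (h2 (show a < a' from by simpa using h)) h'
  have hC : ∀ (b : Fin m) (a : Fin n), ¬ (Fin.natAdd n b < Fin.castAdd m a) := by
    intro b a h
    have : n + (b : ℕ) < a := h
    omega
  have hD : ∀ (b : Fin m) (a : Fin n), (Fin.castAdd m a < Fin.natAdd n b) := by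
    intro b a
    show (a : ℕ) < n + b
    omega
  simp only [hA, hB, hC, hD, if_true, if_false, Finset.prod_const_one, one_mul, mul_one]
  rw [← Finset.prod_mul_distrib]
  refine Finset.prod_congr rfl fun b _ => ?_
  rw [Finset.prod_ite, Finset.prod_const_one, one_mul, Finset.prod_const]
  have hcard := Finset.card_filter_add_card_filter_not (s := (Finset.univ : Finset (Fin n)))
    (fun a => e (Sum.inl a) < e (Sum.inr b))
  rw [Finset.card_univ, Fintype.card_fin] at hcard
  have hcnt : (Finset.univ.filter fun a : Fin n => e (Sum.inl a) < e (Sum.inr b)).card + b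
      = (e (Sum.inr b) : ℕ) := by
    have e1 : (Finset.univ.filter fun s : Fin n ⊕ Fin m => e s < e (Sum.inr b)).card
        = (e (Sum.inr b) : ℕ) := by
      rw [← Fin.card_Iio (e (Sum.inr b))]
      refine Finset.card_bij' (fun s _ => e s) (fun t _ => e.symm t) ?_ ?_ ?_ ?_ <;> simp
    have e2 : (Finset.univ.filter fun s : Fin n ⊕ Fin m => e s < e (Sum.inr b))
        = (Finset.univ.filter fun a : Fin n => e (Sum.inl a) < e (Sum.inr b)).disjSum (Finset.Iio b) := by
      ext s
      rcases s with a | b'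
      · simp
      · simp only [Finset.mem_filter, Finset.mem_univ, true_and, Finset.inr_mem_disjSum, Finset.mem_Iio]
        exact h2.lt_iff_lt
    rw [← e1, e2, Finset.card_disjSum, Fin.card_Iio]
  rw [← hcnt, ← pow_add, ← pow_add]
  set c1 := (Finset.univ.filter fun a : Fin n => e (Sum.inl a) < e (Sum.inr b)).card
  set c2 := (Finset.univ.filter fun a : Fin n => ¬ e (Sum.inl a) < e (Sum.inr b)).card
  rw [show n + (b : ℕ) + (c1 + b) = c2 + 2 * (c1 + b) by omega, pow_add, pow_mul, neg_one_sq, one_pow,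
    mul_one]

theorem det_submatrix_sign {A : Type*} [CommRing A] {n m : ℕ}
    (M : Matrix (Fin (n+m)) (Fin (n+m)) A) (e f : Fin n ⊕ Fin m ≃ Fin (n+m))
    (he1 : StrictMono (e ∘ Sum.inl)) (he2 : StrictMono (e ∘ Sum.inr))
    (hf1 : StrictMono (f ∘ Sum.inl)) (hf2 : StrictMono (f ∘ Sum.inr)) :
    (M.submatrix f e).det =
      ((∏ b : Fin m, (-1 : A) ^ (f (Sum.inr b) : ℕ)) * ∏ b : Fin m, (-1 : A) ^ (e (Sum.inr b) : ℕ)) * M.det := by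
  set s := finSumFinEquiv.symm.trans e with hs
  set t := finSumFinEquiv.symm.trans f with ht
  have h1 : M.submatrix f e = ((M.submatrix t id).submatrix id s).submatrix finSumFinEquiv finSumFinEquiv := by
    ext i j; simp [hs, ht]
  rw [h1, Matrix.det_submatrix_equiv_self, Matrix.det_permute', Matrix.det_permute, hs, ht,
    sign_shuffle e he1 he2, sign_shuffle f hf1 hf2, ← mul_assoc]
  congr 1
  set κ : ℤˣ := ∏ b : Fin m, ((-1 : ℤˣ) ^ n * (-1) ^ (b : ℕ))
  have hk : ((κ : ℤ) : A) * ((κ : ℤ) : A) = 1 := by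
    rcases Int.units_eq_one_or κ with h | h <;> simp [h]
  push_cast
  linear_combination (∏ b : Fin m, (-1 : A) ^ (e (Sum.inr b) : ℕ)) * (∏ b : Fin m, (-1 : A) ^ (f (Sum.inr b) : ℕ)) * hk

theorem conjComp_rev {n m : ℕ} (lam : Fin n → ℕ) (i : Fin m) :
    conjComp n m lam i.rev = n - (Finset.univ.filter fun k : Fin n => (i : ℕ) + 1 ≤ lam k).card := by
  unfold conjComp
  have : m - ((i.rev : Fin m) : ℕ) = i + 1 := by rw [Fin.val_rev]; omega
  rw [this]

theorem conjComp_antitone {n m : ℕ} (lam : Fin n → ℕ) : Antitone (conjComp n m lam) := by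
  intro i j hij
  unfold conjComp
  apply Nat.sub_le_sub_left
  apply Finset.card_le_card
  intro k
  simp only [Finset.mem_filter, Finset.mem_univ, true_and]
  have : (i : ℕ) ≤ j := hij
  omega

theorem count_iff {n : ℕ} (lam : Fin n → ℕ) (hl : Antitone lam) (v : ℕ) (i : Fin n) :
    v ≤ lam i ↔ (i : ℕ) < (Finset.univ.filter fun k : Fin n => v ≤ lam k).card := by
  constructor
  · intro h
    have : Finset.Iic i ⊆ (Finset.univ.filter fun k : Fin n => v ≤ lam k) := by
      intro k hk
      simp only [Finset.mem_filter, Finset.mem_univ, true_and]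
      exact h.trans (hl (Finset.mem_Iic.1 hk))
    have := Finset.card_le_card this
    rw [Fin.card_Iic] at this
    omega
  · intro h
    by_contra hc
    have : (Finset.univ.filter fun k : Fin n => v ≤ lam k) ⊆ Finset.Iio i := by
      intro k hk
      simp only [Finset.mem_filter, Finset.mem_univ, true_and] at hk
      rw [Finset.mem_Iio]
      by_contra hki
      exact hc (hk.trans (hl (not_lt.1 hki)))
    have := Finset.card_le_card this
    rw [Fin.card_Iio] at this
    omega

theorem exists_shuffle {n m : ℕ} (lam : Fin n → ℕ) (hl : Antitone lam) (hm : ∀ i, lam i ≤ m) :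
    ∃ e : Fin n ⊕ Fin m ≃ Fin (n+m), (∀ j, (e (Sum.inl j) : ℕ) = lam j.rev + j) ∧
      (∀ j, (e (Sum.inr j) : ℕ) = conjComp n m lam j.rev + j) := by
  let F : Fin n ⊕ Fin m → Fin (n+m) := Sum.elim
    (fun j => ⟨lam j.rev + j, by have := hm j.rev; omega⟩)
    (fun j => ⟨conjComp n m lam j.rev + j, by
      have : conjComp n m lam j.rev ≤ n := Nat.sub_le _ _
      omega⟩)
  have s1 := beta_strictMono lam hl
  have s2 := beta_strictMono (conjComp n m lam) (conjComp_antitone lam)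
  have hne : ∀ (i : Fin n) (j : Fin m), lam i.rev + i ≠ conjComp n m lam j.rev + j := by
    intro i j
    rw [conjComp_rev]
    have h := count_iff lam hl (j + 1) i.rev
    have hle := Finset.card_le_univ (Finset.univ.filter fun k : Fin n => (j : ℕ) + 1 ≤ lam k)
    rw [Fintype.card_fin] at hle
    rw [Fin.val_rev] at h
    by_cases hh : (j : ℕ) + 1 ≤ lam i.rev
    · have := h.1 hh
      omega
    · have := mt h.2 hh
      omega
  have hinj : Function.Injective F := by
    rintro (i | i) (j | j) h
    · exact congrArg _ (s1.injective (congrArg Fin.val h))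
    · exact absurd (congrArg Fin.val h) (hne i j)
    · exact absurd (congrArg Fin.val h).symm (hne j i)
    · exact congrArg _ (s2.injective (congrArg Fin.val h))
  have hbij : Function.Bijective F := (Fintype.bijective_iff_injective_and_card F).2 ⟨hinj, by simp⟩
  exact ⟨Equiv.ofBijective F hbij, fun j => rfl, fun j => rfl⟩

noncomputable def theta (n : ℕ) :
    MvPolynomial (Fin n ⊕ ℤ) ℤ →ₐ[ℤ] MvPolynomial (Fin n) (MvPolynomial ℤ ℤ) :=
  aeval (Sum.elim (fun i => X i) (fun k => C (X k)))

theorem theta_fact (n : ℕ) (lam : Fin n → ℕ) :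
    theta n (factSchurN n lam) = FS lam (fun i => (X i : MvPolynomial (Fin n) (MvPolynomial ℤ ℤ)))
      (fun j => C (X j : MvPolynomial ℤ ℤ)) := by
  simp [theta, factSchurN, FS, map_sum, map_prod]

theorem theta_schur (n : ℕ) (lam : Fin n → ℕ) :
    theta n (schurN n lam) = FS lam (fun i => (X i : MvPolynomial (Fin n) (MvPolynomial ℤ ℤ)))
      (fun _ => C (0 : MvPolynomial ℤ ℤ)) := by
  simp [theta, schurN, FS, map_sum, map_prod]

theorem theta_rename (n : ℕ) (p : MvPolynomial ℤ ℤ) :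
    theta n (rename Sum.inr p) = C p := by
  unfold theta
  rw [aeval_rename]
  induction p using MvPolynomial.induction_on with
  | C a => simp
  | add p q hp hq => rw [map_add, hp, hq, map_add]
  | mul_X p i hp => rw [map_mul, hp, map_mul]; simp

theorem change_main (n m : ℕ)
    (lam mu : Fin n → ℕ) (hlam : IsPartition lam) (hmu : IsPartition mu)
    (hlamm : ∀ i, lam i ≤ m) (hmum : ∀ i, mu i ≤ m)
    (d : (Fin n → ℕ) →₀ MvPolynomial ℤ ℤ)
    (hdsupp : ∀ ν, d ν ≠ 0 → IsPartition ν)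
    (hdexp : schurN n lam = d.sum fun ν p => rename Sum.inr p * factSchurN n ν)
    (c : (Fin m → ℕ) →₀ MvPolynomial ℤ ℤ)
    (hcsupp : ∀ ν, c ν ≠ 0 → IsPartition ν)
    (hcexp : factSchurN m (conjComp n m mu)
      = c.sum fun ν p => rename Sum.inr p * schurN m ν) :
    d mu = aeval (fun j : ℤ => -(X j : MvPolynomial ℤ ℤ)) (c (conjComp n m lam)) := by
  obtain ⟨e, he1, he2⟩ := exists_shuffle lam hlam hlamm
  obtain ⟨f, hf1, hf2⟩ := exists_shuffle mu hmu hmum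
  set y : ℤ → MvPolynomial ℤ ℤ := fun j => X j with hy
  have hd := extract (fun _ => 0) y lam mu hlam hmu d hdsupp (by
    have := congrArg (theta n) hdexp
    rw [theta_schur, Finsupp.sum, map_sum] at this
    simp only [map_mul, theta_rename, theta_fact] at this
    exact this)
  have hc := extract y (fun _ => 0) (conjComp n m mu) (conjComp n m lam)
    (conjComp_antitone mu) (conjComp_antitone lam) c hcsupp (by
    have := congrArg (theta m) hcexp
    rw [theta_fact, Finsupp.sum, map_sum] at this
    simp only [map_mul, theta_rename, theta_schur] at this
    exact this)
  have hd' : d mu = ((Nmat y (n+m)).submatrix (e ∘ Sum.inl) (f ∘ Sum.inl)).det := by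
    rw [hd, ← Matrix.det_transpose]
    congr 1
    ext1 i j
    simp only [Matrix.transpose_apply, Matrix.of_apply, Matrix.submatrix_apply, Nmat, Function.comp, he1, hf1]
    have : fpoly (fun _ => (0 : MvPolynomial ℤ ℤ)) (lam i.rev + i) = Polynomial.monomial (lam i.rev + i) 1 := by
      simp [fpoly, fp, Polynomial.monomial_one_right_eq_X_pow]
    rw [this, psi_monomial, one_mul]
  have hc' : c (conjComp n m lam) = ((Mmat y (n+m)).submatrix (f ∘ Sum.inr) (e ∘ Sum.inr)).det := by
    rw [hc, ← Matrix.det_transpose]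
    congr 1
    ext1 i j
    simp only [Matrix.transpose_apply, Matrix.of_apply, Matrix.submatrix_apply, Mmat, Function.comp, he2, hf2]
    rw [psi_zero_coeff]
  have hJ := jacobi (Mmat y (n+m)) (Nmat y (n+m)) (Mmat_mul_Nmat y _) e f
  have hsm : ∀ (k : ℕ) (l : Fin k → ℕ) (g : Fin k → Fin (n+m)), Antitone l →
      (∀ j, (g j : ℕ) = l j.rev + j) → StrictMono g := by
    intro k l g hl hg a b hab
    rw [Fin.lt_def, hg, hg]
    exact beta_strictMono l hl hab
  rw [det_submatrix_sign _ e f (hsm n lam _ hlam he1) (hsm m _ _ (conjComp_antitone lam) he2)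
    (hsm n mu _ hmu hf1) (hsm m _ _ (conjComp_antitone mu) hf2), Mmat_det, mul_one, ← hd'] at hJ
  rw [hc', AlgHom.map_det]
  set pf := ∏ b : Fin m, (-1 : MvPolynomial ℤ ℤ) ^ (f (Sum.inr b) : ℕ) with hpf
  set pe := ∏ b : Fin m, (-1 : MvPolynomial ℤ ℤ) ^ (e (Sum.inr b) : ℕ) with hpe
  have h1 : pf * pf = 1 := by
    rw [hpf, ← Finset.prod_mul_distrib]
    exact Finset.prod_eq_one fun b _ => by rw [← pow_add, ← two_mul, pow_mul, neg_one_sq, one_pow]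
  have h2 : pe * pe = 1 := by
    rw [hpe, ← Finset.prod_mul_distrib]
    exact Finset.prod_eq_one fun b _ => by rw [← pow_add, ← two_mul, pow_mul, neg_one_sq, one_pow]
  have hfin : ((aeval (fun j : ℤ => -(X j : MvPolynomial ℤ ℤ))).mapMatrix
      ((Mmat y (n+m)).submatrix (f ∘ Sum.inr) (e ∘ Sum.inr))).det
      = pf * (pe * ((Mmat y (n+m)).submatrix (f ∘ Sum.inr) (e ∘ Sum.inr)).det) := by
    rw [hpf, hpe, ← Matrix.det_mul_row, ← Matrix.det_mul_column]
    congr 1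
    ext1 i j
    simp only [AlgHom.mapMatrix_apply, Matrix.map_apply, Matrix.submatrix_apply, Mmat, Matrix.of_apply,
      Function.comp]
    rw [hy, fpoly_coeff_neg]
    ring
  rw [hfin, ← hJ]
  linear_combination (-d mu) * h1 - d mu * pf * pf * h2

/-- Proposition 4.1(iii): `d_{λ,n}^μ(y) = c_{μ^c,m}^{λ^c}(-y)`,
where `λ^c, μ^c ∈ P_m` are the complements of `λ, μ` in the `n × m` rectangle. -/
theorem change_of_basis_d_eq_c_complement (n m : ℕ) (hn : 1 ≤ n) (hm : 1 ≤ m)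
    (lam mu : Fin n → ℕ) (hlam : IsPartition lam) (hmu : IsPartition mu)
    (hlamm : ∀ i, lam i ≤ m) (hmum : ∀ i, mu i ≤ m)
    -- the coefficients `d_{λ,n}^ν(y)`
    (d : (Fin n → ℕ) →₀ MvPolynomial ℤ ℤ)
    (hdsupp : ∀ ν, d ν ≠ 0 → IsPartition ν)
    (hdexp : schurN n lam = d.sum fun ν p => rename Sum.inr p * factSchurN n ν)
    -- the coefficients `c_{μ^c,m}^ν(y)`
    (c : (Fin m → ℕ) →₀ MvPolynomial ℤ ℤ)
    (hcsupp : ∀ ν, c ν ≠ 0 → IsPartition ν)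
    (hcexp : factSchurN m (conjComp n m mu)
      = c.sum fun ν p => rename Sum.inr p * schurN m ν) :
    d mu = aeval (fun j : ℤ => -(X j : MvPolynomial ℤ ℤ)) (c (conjComp n m lam)) := by
  exact change_main n m lam mu hlam hmu hlamm hmum d hdsupp hdexp c hcsupp hcexp
end

section
/- Let N ≥ 1 and consider the N×N matrices over ℤ[y_1, y_2, …] given by A = ( e_{i−j}(y_1,…,y_i) )_{0≤i,j≤N−1} and B = ( h_{i−j}(−y_1,…,−y_{j+1}) )_{0≤i,j≤N−1}. Then A and B are inverse matrices: AB = BA = Id. -/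
open Finset MvPolynomial

attribute [local instance] Classical.propDecidable

noncomputable def Eser (p : ℕ) : PowerSeries (MvPolynomial ℤ ℤ) :=
  PowerSeries.mk fun n => eY p n

noncomputable def Hser (p : ℕ) : PowerSeries (MvPolynomial ℤ ℤ) :=
  PowerSeries.mk fun n => hYneg p n

lemma eY_nat (p n : ℕ) : eY p (n : ℤ) =
    ∑ s ∈ Finset.powersetCard n ((Finset.range p).image fun k : ℕ => ((k : ℤ) + 1)),
      ∏ j ∈ s, X j := by
  rw [eY, if_pos (Int.natCast_nonneg _), Int.toNat_natCast]
  congr 2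
  ext a
  simp [Finset.bind_def]
  exact exists_congr fun b => and_congr_right fun _ => ⟨fun h => by omega, fun h => by omega⟩

lemma eY_zero_right (p : ℕ) : eY p 0 = 1 := by simp [eY]

lemma hYneg_zero_right (p : ℕ) : hYneg p 0 = 1 := by
  simp [hYneg]
  exact Multiset.prod_zero

lemma eY_zero_succ (n : ℕ) : eY 0 ((n + 1 : ℕ) : ℤ) = 0 := by
  rw [eY_nat]
  rw [Finset.powersetCard_eq_empty.2 (by simp), Finset.sum_empty]

lemma hYneg_zero_succ (n : ℕ) : hYneg 0 ((n + 1 : ℕ) : ℤ) = 0 := by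
  rw [hYneg, if_pos (by positivity), Int.toNat_natCast]
  simp

lemma eY_succ (p n : ℕ) : eY (p + 1) ((n + 1 : ℕ) : ℤ) =
    eY p ((n + 1 : ℕ) : ℤ) + X ((p : ℤ) + 1) * eY p (n : ℤ) := by
  simp only [eY_nat]
  have hnot : ((p : ℤ) + 1) ∉ (Finset.range p).image (fun k : ℕ => (k + 1 : ℤ)) := by
    simp
  rw [Finset.range_add_one, Finset.image_insert, Finset.powersetCard_succ_insert hnot,
    Finset.sum_union, Finset.sum_image, Finset.mul_sum]
  · congr 1
    refine Finset.sum_congr rfl fun s hs => ?_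
    rw [Finset.prod_insert]
    exact fun h => hnot ((Finset.mem_powersetCard.1 hs).1 h)
  · intro s hs t ht hst
    have h1 : ((p : ℤ) + 1) ∉ s := fun h => hnot ((Finset.mem_powersetCard.1 hs).1 h)
    have h2 : ((p : ℤ) + 1) ∉ t := fun h => hnot ((Finset.mem_powersetCard.1 ht).1 h)
    rw [← Finset.erase_insert h1, ← Finset.erase_insert h2, hst]
  · rw [Finset.disjoint_left]
    intro s hs hs'
    obtain ⟨t, ht, rfl⟩ := Finset.mem_image.1 hs'
    exact hnot ((Finset.mem_powersetCard.1 hs).1 (Finset.mem_insert_self _ _))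

lemma hYneg_succ (p n : ℕ) : hYneg (p + 1) ((n + 1 : ℕ) : ℤ) =
    hYneg p ((n + 1 : ℕ) : ℤ) - X ((p : ℤ) + 1) * hYneg (p + 1) (n : ℤ) := by
  simp only [hYneg, if_pos (Int.natCast_nonneg _), Int.toNat_natCast]
  have hU : (Finset.range (p + 1)).sym (n + 1) = (Finset.range p).sym (n + 1) ∪
      ((Finset.range (p + 1)).sym n).image (fun m => Sym.cons p m) := by
    ext m
    simp only [Finset.mem_union, Finset.mem_image, Finset.mem_sym_iff]
    constructor
    · intro h
      by_cases hp : p ∈ m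
      · right
        obtain ⟨m', rfl⟩ := Sym.exists_cons_of_mem hp
        exact ⟨m', fun a ha => h a (Sym.mem_cons_of_mem ha), rfl⟩
      · left
        intro a ha
        have := h a ha
        have : a ≠ p := fun e => hp (e ▸ ha)
        simp at *; omega
    · rintro (h | ⟨m', h, rfl⟩) a ha
      · have := h a ha
        simp at *; omega
      · rcases Sym.mem_cons.1 ha with rfl | ha
        · simp
        · exact h a ha
  rw [hU, Finset.sum_union, Finset.sum_image, sub_eq_add_neg, Finset.mul_sum,
    ← Finset.sum_neg_distrib]
  · congr 1
    refine Finset.sum_congr rfl fun s hs => ?_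
    simp [Sym.coe_cons, Multiset.map_cons, Multiset.prod_cons, neg_mul]
  · intro s hs t ht hst
    exact Sym.cons_inj_right _ _ _ |>.1 hst
  · rw [Finset.disjoint_left]
    intro s hs hs'
    obtain ⟨t, ht, rfl⟩ := Finset.mem_image.1 hs'
    have := Finset.mem_sym_iff.1 hs p (Sym.mem_cons_self _ _)
    simp at this

lemma Eser_zero : Eser 0 = 1 := by
  ext1 n
  cases n with
  | zero => simp [Eser, eY_zero_right]
  | succ n => rw [Eser, PowerSeries.coeff_mk, eY_zero_succ]; simp [PowerSeries.coeff_one]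

lemma Hser_zero : Hser 0 = 1 := by
  ext1 n
  cases n with
  | zero => simp [Hser, hYneg_zero_right]
  | succ n => rw [Hser, PowerSeries.coeff_mk, hYneg_zero_succ]; simp [PowerSeries.coeff_one]

lemma Eser_succ (p : ℕ) : Eser (p + 1) =
    Eser p + PowerSeries.C (X ((p : ℤ) + 1)) * (Eser p * PowerSeries.X) := by
  ext1 n
  cases n with
  | zero => simp [Eser, eY_zero_right]
  | succ n =>
    rw [map_add, PowerSeries.coeff_C_mul, PowerSeries.coeff_succ_mul_X]
    simp only [Eser, PowerSeries.coeff_mk]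
    exact eY_succ p n

lemma Hser_succ (p : ℕ) : Hser (p + 1) =
    Hser p - PowerSeries.C (X ((p : ℤ) + 1)) * (Hser (p + 1) * PowerSeries.X) := by
  ext1 n
  cases n with
  | zero => simp [Hser, hYneg_zero_right]
  | succ n =>
    rw [map_sub, PowerSeries.coeff_C_mul, PowerSeries.coeff_succ_mul_X]
    simp only [Hser, PowerSeries.coeff_mk]
    exact hYneg_succ p n

lemma Eser_mul_Hser (p : ℕ) : Eser p * Hser p = 1 := by
  induction p with
  | zero => rw [Eser_zero, Hser_zero, one_mul]
  | succ p ih =>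
    have h := Hser_succ p
    rw [Eser_succ]
    linear_combination ih + Eser p * h

lemma coeff_EH (q m : ℕ) : ∀ n, m < n → PowerSeries.coeff n (Eser (q + m) * Hser q) = 0 := by
  induction m with
  | zero =>
    intro n hn
    rw [add_zero, Eser_mul_Hser, PowerSeries.coeff_one, if_neg (by omega)]
  | succ m ih =>
    intro n hn
    obtain ⟨n, rfl⟩ : ∃ k, n = k + 1 := ⟨n - 1, by omega⟩
    rw [← add_assoc, Eser_succ, show ∀ a b c d : PowerSeries (MvPolynomial ℤ ℤ),
      (a + b * (a * c)) * d = a * d + b * ((a * d) * c) from fun _ _ _ _ => by ring,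
      map_add, PowerSeries.coeff_C_mul, PowerSeries.coeff_succ_mul_X, ih _ (by omega),
      ih _ (by omega)]
    simp

lemma eY_neg (p : ℕ) (d : ℤ) (h : d < 0) : eY p d = 0 := by
  rw [eY, if_neg (by omega)]

lemma hYneg_neg (p : ℕ) (d : ℤ) (h : d < 0) : hYneg p d = 0 := by
  rw [hYneg, if_neg (by omega)]

lemma sum_eq_coeff (N i k p q : ℕ) (hi : i < N) (hk : k ≤ i) :
    ∑ j ∈ Finset.range N, eY p ((i : ℤ) - j) * hYneg q ((j : ℤ) - k) =
      PowerSeries.coeff (i - k) (Eser p * Hser q) := by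
  rw [mul_comm, PowerSeries.coeff_mul, Finset.Nat.sum_antidiagonal_eq_sum_range_succ_mk]
  have hsub : (Finset.range (i - k).succ).map (addRightEmbedding k) ⊆ Finset.range N := by
    intro x
    simp
    omega
  rw [← Finset.sum_subset hsub, Finset.sum_map]
  · refine Finset.sum_congr rfl fun a ha => ?_
    have : a < i - k + 1 := by simpa using ha
    simp only [Eser, Hser, PowerSeries.coeff_mk, addRightEmbedding_apply]
    rw [mul_comm]
    congr 2 <;> push_cast <;> omega
  · intro x hx hx'
    by_cases h1 : x < k
    · rw [hYneg_neg _ _ (by omega), mul_zero]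
    · by_cases h2 : i < x
      · rw [eY_neg _ _ (by omega), zero_mul]
      · exfalso
        apply hx'
        simp only [Finset.mem_map, Finset.mem_range, addRightEmbedding_apply]
        exact ⟨x - k, by omega, by omega⟩

/-- Lemma 4.2: the matrices
`A = (e_{i-j}(y_1,…,y_i))_{0 ≤ i,j ≤ N-1}` and
`B = (h_{i-j}(-y_1,…,-y_{j+1}))_{0 ≤ i,j ≤ N-1}` are inverse to each other. -/
theorem eh_matrices_inverse (N : ℕ) (hN : 1 ≤ N) :
    (Matrix.of fun i j : Fin N => eY (i : ℕ) ((i : ℕ) - (j : ℕ) : ℤ)) *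
        (Matrix.of fun i j : Fin N => hYneg ((j : ℕ) + 1) ((i : ℕ) - (j : ℕ) : ℤ)) = 1 ∧
    (Matrix.of fun i j : Fin N => hYneg ((j : ℕ) + 1) ((i : ℕ) - (j : ℕ) : ℤ)) *
        (Matrix.of fun i j : Fin N => eY (i : ℕ) ((i : ℕ) - (j : ℕ) : ℤ)) = 1 := by
  refine (fun h => ⟨h, mul_eq_one_comm.1 h⟩) ?_
  ext1 i k
  rw [Matrix.mul_apply]
  simp only [Matrix.of_apply]
  rw [Fin.sum_univ_eq_sum_range (fun j : ℕ =>
    eY (i : ℕ) (((i : ℕ) : ℤ) - (j : ℤ)) * hYneg ((k : ℕ) + 1) ((j : ℤ) - ((k : ℕ) : ℤ))) N]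
  rcases lt_trichotomy (i : ℕ) (k : ℕ) with h | h | h
  · rw [Matrix.one_apply_ne (by rintro rfl; omega)]
    refine Finset.sum_eq_zero fun j _ => ?_
    by_cases hj : (i : ℕ) < j
    · rw [eY_neg _ _ (by omega), zero_mul]
    · rw [hYneg_neg _ _ (by omega), mul_zero]
  · obtain rfl : i = k := Fin.ext h
    rw [sum_eq_coeff N i i _ _ i.2 le_rfl]
    simp [Eser, Hser, eY_zero_right, hYneg_zero_right]
  · rw [Matrix.one_apply_ne (by rintro rfl; omega), sum_eq_coeff N i k _ _ i.2 h.le]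
    have := coeff_EH (k + 1) (i - (k + 1)) (i - k) (by omega)
    rwa [show (k : ℕ) + 1 + (i - (k + 1)) = i by omega] at this
end
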